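/- arXiv:1510.00354 — 2 statements merged into one kernel-verified Lean document; each statement's English description precedes it below -/
import Mathlib

section
/- Let G be a graph on v vertices containing no isolated triangle (i.e., f(G) = 0 for the isolated-triangle property f). Then any two distinct sensitive triples of G are vertex disjoint. -/
open Finset

/-- The coordinate set: `k`-element subsets of `Fin v`. -/
abbrev KSet (v k : ℕ) : Type := {S : Finset (Fin v) // S.card = k}

/-- A `k`-uniform hypergraph on `Fin v`: a Boolean function on `k`-sets. -/
abbrev HGraph (v k : ℕ) : Type := KSet v k → Bool

/-- Sensitivity of `f` at input `x`: the number of coordinates whose flip changes `f`. -/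
def localSens {I : Type} [Fintype I] [DecidableEq I]
    (f : (I → Bool) → Bool) (x : I → Bool) : ℕ :=
  (Finset.univ.filter fun i => f (Function.update x i (!x i)) ≠ f x).card

/-- Sensitivity of `f`: maximum of `localSens f x` over all inputs `x`. -/
def sens {I : Type} [Fintype I] [DecidableEq I] (f : (I → Bool) → Bool) : ℕ :=
  Finset.univ.sup (localSens f)

/-- `sensOn b f` is `s^b(f)`: max sensitivity over inputs with `f x = b`. -/
def sensOn {I : Type} [Fintype I] [DecidableEq I] (b : Bool) (f : (I → Bool) → Bool) : ℕ :=
  (Finset.univ.filter fun x => f x = b).sup (localSens f)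

/-- Flip all the coordinates of `x` in the block `B`. -/
def flipBlock {I : Type} [DecidableEq I] (x : I → Bool) (B : Finset I) : I → Bool :=
  fun i => if i ∈ B then !x i else x i

/-- Block sensitivity of `f` at `x`: maximum number of pairwise disjoint sensitive blocks. -/
noncomputable def localBlockSens {I : Type} [Fintype I] [DecidableEq I]
    (f : (I → Bool) → Bool) (x : I → Bool) : ℕ :=
  sSup {n : ℕ | ∃ B : Fin n → Finset I,
    (∀ j, f (flipBlock x (B j)) ≠ f x) ∧
    ∀ j j', j ≠ j' → Disjoint (B j) (B j')}

/-- Block sensitivity of `f`. -/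
noncomputable def blockSens {I : Type} [Fintype I] [DecidableEq I]
    (f : (I → Bool) → Bool) : ℕ :=
  Finset.univ.sup (localBlockSens f)

/-- Image of a `k`-set under a permutation of the vertices. -/
def permKSet {v k : ℕ} (σ : Equiv.Perm (Fin v)) (S : KSet v k) : KSet v k :=
  ⟨S.1.map σ.toEmbedding, by rw [Finset.card_map]; exact S.2⟩

/-- A `k`-uniform hypergraph property: invariance under all vertex permutations,
where `(σ • G) S = G (σ⁻¹ S)`. -/
def IsHypergraphProperty {v k : ℕ} (f : HGraph v k → Bool) : Prop :=
  ∀ (σ : Equiv.Perm (Fin v)) (G : HGraph v k),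
    f (fun S => G (permKSet σ⁻¹ S)) = f G

/-- `T` is an isolated triangle in the graph `G`: `T` has three vertices, all edges
inside `T` are present, and no edge of `G` joins `T` to a vertex outside `T`. -/
def IsIsolatedTriangle {v : ℕ} (G : HGraph v 2) (T : Finset (Fin v)) : Prop :=
  T.card = 3 ∧
  (∀ E : KSet v 2, E.1 ⊆ T → G E = true) ∧
  (∀ E : KSet v 2, G E = true → ¬ E.1 ⊆ T → E.1 ∩ T = ∅)

/-- The isolated-triangle graph property. -/
noncomputable def isoTriangleProp (v : ℕ) : HGraph v 2 → Bool :=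
  fun G => @decide (∃ T : Finset (Fin v), IsIsolatedTriangle G T) (Classical.propDecidable _)

/-- `T` is a sensitive triple for `G`: flipping a single edge makes `T` an isolated
triangle. -/
def SensitiveTriple {v : ℕ} (G : HGraph v 2) (T : Finset (Fin v)) : Prop :=
  T.card = 3 ∧ ∃ e : KSet v 2, IsIsolatedTriangle (Function.update G e (!G e)) T

/-!
If `S` and `T` are isolated cliques of two graphs, then every pair joining `S ∩ T` to `S ∆ T` is an
edge of one graph and a non-edge of the other. Hence the graphs differ in at least
`#(S ∩ T) * #(S ∆ T)` pairs. For distinct intersecting triples this product is at least `4`, whereas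
two graphs obtained from `G` by single flips differ in at most `2` pairs.
-/

open scoped symmDiff

lemma two_mul_card_le_card_inter_mul_card_symmDiff_add_two {α : Type*} [DecidableEq α]
    {S T : Finset α} (hcard : #S = #T) (hne : S ≠ T) (hST : (S ∩ T).Nonempty) :
    2 * #S ≤ #(S ∩ T) * #(S ∆ T) + 2 := by
  have hinter : 0 < #(S ∩ T) := hST.card_pos
  have hsdiff : 0 < #(S \ T) :=
    (sdiff_nonempty.mpr fun h ↦ hne (eq_of_subset_of_card_le h hcard.ge)).card_pos
  have hsymm : #(S ∆ T) = 2 * #(S \ T) := by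
    rw [symmDiff_def, sup_eq_union, card_union_of_disjoint disjoint_sdiff_sdiff,
      card_sdiff_comm hcard.symm, two_mul]
  -- The middle step is `0 ≤ (#(S ∩ T) - 1) * (#(S \ T) - 1)`.
  calc 2 * #S = 2 * (#(S \ T) + #(S ∩ T)) := by rw [card_sdiff_add_card_inter]
    _ ≤ #(S ∩ T) * (2 * #(S \ T)) + 2 := by nlinarith
    _ = #(S ∩ T) * #(S ∆ T) + 2 := by rw [hsymm]

lemma injOn_pair_of_disjoint {α : Type*} [DecidableEq α] {A B : Finset α} (hAB : Disjoint A B) :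
    Set.InjOn (fun p : α × α ↦ ({p.1, p.2} : Finset α)) (A ×ˢ B) := by
  rintro ⟨a, x⟩ ⟨ha, hx⟩ ⟨b, y⟩ ⟨hb, hy⟩ (hpair : ({a, x} : Finset α) = {b, y})
  have ha_mem : a ∈ ({b, y} : Finset α) := hpair ▸ mem_insert_self a {x}
  have hx_mem : x ∈ ({b, y} : Finset α) := hpair ▸ mem_insert_of_mem (mem_singleton_self x)
  have hay : a ≠ y := disjoint_iff_ne.mp hAB a ha y hy
  have hbx : b ≠ x := disjoint_iff_ne.mp hAB b hb x hx
  grind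

section Hamming

variable {ι : Type*} [Fintype ι] [DecidableEq ι] {β : ι → Type*} [∀ i, DecidableEq (β i)]

lemma hammingDist_update_self_le_one (x : ∀ i, β i) (i : ι) (a : β i) :
    hammingDist (Function.update x i a) x ≤ 1 := by
  have hsub : ({j | Function.update x i a j ≠ x j} : Finset ι) ⊆ {i} := fun j hj ↦ by
    contrapose! hj
    simp [Function.update_of_ne (notMem_singleton.mp hj)]
  exact card_le_card hsub

lemma hammingDist_update_update_le_two (x : ∀ i, β i) (i j : ι) (a : β i) (b : β j) :
    hammingDist (Function.update x i a) (Function.update x j b) ≤ 2 :=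
  (hammingDist_triangle_right _ _ x).trans <|
    add_le_add (hammingDist_update_self_le_one x i a) (hammingDist_update_self_le_one x j b)

end Hamming

/-- `T` is an isolated clique of the `k`-uniform hypergraph `G`: every `k`-subset of `T` is an edge,
and every edge meeting `T` is contained in `T`. An isolated triangle is an isolated clique with
three vertices, in the case `k = 2` of graphs. -/
def IsIsolatedClique {v k : ℕ} (G : HGraph v k) (T : Finset (Fin v)) : Prop :=
  (∀ E : KSet v k, E.1 ⊆ T → G E = true) ∧
  (∀ E : KSet v k, G E = true → ¬ E.1 ⊆ T → E.1 ∩ T = ∅)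

namespace IsIsolatedClique

variable {v k : ℕ} {S T : Finset (Fin v)}

lemma ne_of_subset_of_not_subset {G₁ G₂ : HGraph v k} (hS : IsIsolatedClique G₁ S)
    (hT : IsIsolatedClique G₂ T) {E : KSet v k} (hES : E.1 ⊆ S) (hET : ¬ E.1 ⊆ T)
    (hmeet : (E.1 ∩ T).Nonempty) : G₁ E ≠ G₂ E := fun h ↦
  hmeet.ne_empty (hT.2 E (h ▸ hS.1 E hES) hET)

lemma ne_of_mem_inter_of_mem_symmDiff {G₁ G₂ : HGraph v 2} (hS : IsIsolatedClique G₁ S)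
    (hT : IsIsolatedClique G₂ T) {E : KSet v 2} {a x : Fin v} (hE : E.1 = {a, x})
    (ha : a ∈ S ∩ T) (hx : x ∈ S ∆ T) : G₁ E ≠ G₂ E := by
  obtain ⟨haS, haT⟩ := mem_inter.mp ha
  have haE : a ∈ E.1 := by simp [hE]
  have hxE : x ∈ E.1 := by simp [hE]
  rcases mem_symmDiff.mp hx with ⟨hxS, hxT⟩ | ⟨hxT, hxS⟩
  · exact hS.ne_of_subset_of_not_subset hT (by simp [hE, insert_subset_iff, haS, hxS])
      (fun h ↦ hxT (h hxE)) ⟨a, mem_inter.mpr ⟨haE, haT⟩⟩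
  · exact (hT.ne_of_subset_of_not_subset hS (by simp [hE, insert_subset_iff, haT, hxT])
      (fun h ↦ hxS (h hxE)) ⟨a, mem_inter.mpr ⟨haE, haS⟩⟩).symm

lemma card_inter_mul_card_symmDiff_le_hammingDist {G₁ G₂ : HGraph v 2}
    (hS : IsIsolatedClique G₁ S) (hT : IsIsolatedClique G₂ T) :
    #(S ∩ T) * #(S ∆ T) ≤ hammingDist G₁ G₂ := by
  have hdisj : Disjoint (S ∩ T) (S ∆ T) := (disjoint_symmDiff_inf S T).symm
  rw [← card_product]
  refine card_le_card_of_forall_subsingleton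
    (fun (p : Fin v × Fin v) (E : KSet v 2) ↦ E.1 = {p.1, p.2}) ?_ ?_
  · rintro ⟨a, x⟩ hax
    obtain ⟨ha, hx⟩ := mem_product.mp hax
    have hne : a ≠ x := disjoint_iff_ne.mp hdisj a ha x hx
    exact ⟨⟨{a, x}, card_pair hne⟩,
      (mem_filter_univ _).mpr (hS.ne_of_mem_inter_of_mem_symmDiff hT rfl ha hx), rfl⟩
  · rintro E - p ⟨hp, hpE⟩ q ⟨hq, hqE⟩
    exact injOn_pair_of_disjoint hdisj (mem_product.mp hp) (mem_product.mp hq)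
      (hpE.symm.trans hqE)

theorem inter_eq_empty_of_hammingDist_add_two_lt {G₁ G₂ : HGraph v 2}
    (hS : IsIsolatedClique G₁ S) (hT : IsIsolatedClique G₂ T) (hcard : #S = #T) (hne : S ≠ T)
    (hdist : hammingDist G₁ G₂ + 2 < 2 * #S) : S ∩ T = ∅ := by
  by_contra hST
  have hlower := two_mul_card_le_card_inter_mul_card_symmDiff_add_two hcard hne
    (nonempty_iff_ne_empty.mpr hST)
  have hupper := hS.card_inter_mul_card_symmDiff_le_hammingDist hT
  lia

end IsIsolatedClique

theorem stmt8_general {v : ℕ} {G : HGraph v 2} {T₁ T₂ : Finset (Fin v)}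
    (h₁ : SensitiveTriple G T₁) (h₂ : SensitiveTriple G T₂) (hne : T₁ ≠ T₂) :
    T₁ ∩ T₂ = ∅ := by
  obtain ⟨hcard₁, d, -, hclique₁⟩ := h₁
  obtain ⟨hcard₂, e, -, hclique₂⟩ := h₂
  have hdist := hammingDist_update_update_le_two G d e (!G d) (!G e)
  exact IsIsolatedClique.inter_eq_empty_of_hammingDist_add_two_lt hclique₁ hclique₂
    (hcard₁.trans hcard₂.symm) hne (by lia)

theorem stmt8 (v : ℕ) (G : HGraph v 2) (hG : isoTriangleProp v G = false)
    (T₁ T₂ : Finset (Fin v))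
    (h₁ : SensitiveTriple G T₁) (h₂ : SensitiveTriple G T₂) (hne : T₁ ≠ T₂) :
    T₁ ∩ T₂ = ∅ :=
  stmt8_general h₁ h₂ hne
end

section
/- Let k ≥ 2 and i be integers with 1 ≤ i ≤ k/2. Then there exists a sequence (f_v)_{v ∈ ℕ}, where f_v is a k-uniform hypergraph property on v vertices, together with constants c, C > 0 and v₀ ∈ ℕ, such that for all v ≥ v₀: c·v^{k−i} ≤ s(f_v) ≤ C·v^{k−i} and c·v^k ≤ bs(f_v) ≤ C·v^k; that is, s(f_v) = Θ(v^{k−i}) and bs(f_v) = Θ(v^k). -/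
open Finset

/-!
The property separating the two measures is that of containing an *isolated clique*: `k + 1`
vertices such that the edges meeting them in at least `i` vertices are exactly the `k`-subsets
of these vertices.

Two distinct isolated cliques sharing at least `i` vertices live in hypergraphs at Hamming distance
at least `4`. Hence, at a hypergraph without isolated cliques, the cliques created by two different
flips share fewer than `i` vertices, and there are at most `v.choose i` sensitive `k`-sets. At a
hypergraph with an isolated clique `T`, only the `O(v ^ (k - i))` many `k`-sets meeting `T` in at
least `i` vertices can be sensitive. As `i ≤ k - i`, the sensitivity is `O(v ^ (k - i))`, and the
hypergraph consisting of a single clique shows that this is sharp.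

At the empty hypergraph, the `k`-subsets of any `k + 1` vertices form a sensitive block. The
`(k + 1)`-sets of vertices with a prescribed sum modulo `v` pairwise share fewer than `k` vertices,
so their blocks are disjoint, and for a most frequent sum there are `Ω(v ^ k)` of them.
-/

section BooleanFunction

variable {I : Type} [DecidableEq I]

lemma nonempty_of_flipBlock_ne {f : (I → Bool) → Bool} {x : I → Bool} {B : Finset I}
    (hB : f (flipBlock x B) ≠ f x) : B.Nonempty := by
  rw [nonempty_iff_ne_empty]
  rintro rfl
  exact hB (congrArg f (funext fun i => if_neg (notMem_empty i)))

variable [Fintype I]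

lemma localSens_le_sens (f : (I → Bool) → Bool) (x : I → Bool) : localSens f x ≤ sens f :=
  le_sup (mem_univ x)

lemma le_card_of_disjoint_sensitive_blocks {f : (I → Bool) → Bool} {x : I → Bool} {n : ℕ}
    {B : Fin n → Finset I} (hB : ∀ j, f (flipBlock x (B j)) ≠ f x)
    (hdisj : Pairwise (Function.onFun Disjoint B)) : n ≤ Fintype.card I :=
  calc n = #(univ : Finset (Fin n)) := (card_fin n).symm
    _ ≤ #(univ.biUnion B) :=
      card_le_card_biUnion (hdisj.set_pairwise _) fun j _ => nonempty_of_flipBlock_ne (hB j)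
    _ ≤ Fintype.card I := card_le_univ _

lemma blockSens_le_card (f : (I → Bool) → Bool) : blockSens f ≤ Fintype.card I :=
  Finset.sup_le fun _ _ => csSup_le' fun _ ⟨_, hB, hdisj⟩ =>
    le_card_of_disjoint_sensitive_blocks hB fun j j' => hdisj j j'

lemma card_le_blockSens {ι : Type*} {f : (I → Bool) → Bool} {x : I → Bool} {s : Finset ι}
    {B : ι → Finset I} (hB : ∀ j ∈ s, f (flipBlock x (B j)) ≠ f x)
    (hdisj : (s : Set ι).PairwiseDisjoint B) : #s ≤ blockSens f := by
  let e := s.equivFin.symm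
  have hlocal : #s ≤ localBlockSens f x := by
    refine le_csSup ⟨Fintype.card I, fun _ ⟨_, hB, hdisj⟩ =>
      le_card_of_disjoint_sensitive_blocks hB fun j j' => hdisj j j'⟩
      ⟨fun j => B (e j), fun j => hB _ (e j).2, fun j j' hjj' => ?_⟩
    exact hdisj (e j).2 (e j').2 fun h => hjj' (e.injective (Subtype.ext h))
  exact hlocal.trans (le_sup (f := localBlockSens f) (mem_univ x))

end BooleanFunction

lemma hammingDist_update_le_one {ι : Type*} {β : ι → Type*} [Fintype ι] [DecidableEq ι]
    [∀ i, DecidableEq (β i)] (x : ∀ i, β i) (i : ι) (b : β i) :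
    hammingDist (Function.update x i b) x ≤ 1 := by
  have hne {j : ι} (hj : Function.update x i b j ≠ x j) : j = i := by
    by_contra h
    exact hj (Function.update_of_ne h b x)
  refine card_le_one.mpr fun j hj j' hj' => ?_
  rw [hne (mem_filter.mp hj).2, hne (mem_filter.mp hj').2]

section FinsetCounting

open scoped FinsetFamily

variable {α : Type*} [DecidableEq α]

lemma one_lt_card_filter_powersetCard {s t : Finset α} {k i : ℕ} (hk : 2 ≤ k) (hik : i < k)
    (hs : #s = k + 1) (ht : #t = k + 1) (hst : s ≠ t) (hi : i ≤ #(s ∩ t)) :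
    1 < #{r ∈ powersetCard k t | ¬ r ⊆ s ∧ i ≤ #(r ∩ s)} := by
  obtain ⟨q, hqt, hq, hgood⟩ : ∃ q ⊆ t, 1 < #q ∧
      ∀ a ∈ q, ¬ t.erase a ⊆ s ∧ i ≤ #(t.erase a ∩ s) := by
    have hcard : #(t \ s) + #(s ∩ t) = k + 1 := by
      rw [inter_comm, card_sdiff_add_card_inter, ht]
    rcases lt_or_ge 1 #(t \ s) with hlarge | hsmall
    · refine ⟨t \ s, sdiff_subset, hlarge, fun a ha => ⟨fun hsub => ?_, ?_⟩⟩
      · obtain ⟨b, hb, hba⟩ := exists_mem_ne hlarge a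
        grind
      · rwa [erase_inter, erase_eq_of_notMem (by grind), inter_comm]
    · obtain ⟨b, hbt, hbs⟩ : ∃ b ∈ t, b ∉ s :=
        not_subset.mp fun hts => hst (eq_of_subset_of_card_le hts (by rw [hs, ht])).symm
      refine ⟨s ∩ t, inter_subset_right, by lia, fun a ha => ⟨by grind, ?_⟩⟩
      rw [erase_inter, inter_comm, card_erase_of_mem ha]
      lia
  refine hq.trans_le (card_le_card_of_injOn t.erase (fun a ha => ?_) ?_)
  · simp [erase_subset, card_erase_of_mem (hqt ha), ht, hgood a ha, -erase_inter]
  · exact (erase_injOn t).mono hqt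

section Fintype

variable [Fintype α]

lemma card_filter_card_inter_eq (t : Finset α) {i k : ℕ} (hik : i ≤ k) :
    #{s ∈ powersetCard k univ | #(s ∩ t) = i} =
      (#t).choose i * (Fintype.card α - #t).choose (k - i) := by
  rw [← card_compl, ← card_powersetCard, ← card_powersetCard, ← card_product]
  have hsplit {p : Finset α × Finset α} (hp : p ∈ powersetCard i t ×ˢ powersetCard (k - i) tᶜ) :
      (p.1 ∪ p.2) ∩ t = p.1 ∧ (p.1 ∪ p.2) \ t = p.2 := by
    simp only [mem_product, mem_powersetCard, subset_compl_iff_disjoint_right, disjoint_left] at hp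
    constructor <;> grind
  refine card_nbij' (fun s => (s ∩ t, s \ t)) (fun p => p.1 ∪ p.2) (fun s hs => ?_)
    (fun p hp => ?_) (fun s _ => ?_) fun p hp => Prod.ext (hsplit hp).1 (hsplit hp).2
  · obtain ⟨hsk, hsi⟩ : #s = k ∧ #(s ∩ t) = i := by simpa using hs
    have hsdiff : #(s \ t) = k - i := by rw [card_sdiff, inter_comm, hsk, hsi]
    simp [hsi, hsdiff, subset_compl_iff_disjoint_right, sdiff_disjoint]
  · obtain ⟨hpi, hpk⟩ : #p.1 = i ∧ #p.2 = k - i := by simp_all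
    have hcard : #(p.1 ∪ p.2) = k := by
      rw [← card_inter_add_card_sdiff _ t, (hsplit hp).1, (hsplit hp).2, hpi, hpk]
      lia
    simp [hcard, (hsplit hp).1, hpi]
  · exact (union_comm _ _).trans (sdiff_union_inter s t)

lemma card_filter_le_card_inter_le (t : Finset α) (i k : ℕ) :
    #{s ∈ powersetCard k univ | i ≤ #(s ∩ t)} ≤
      (#t).choose i * (Fintype.card α).choose (k - i) := by
  have hsub : {s ∈ powersetCard k (univ : Finset α) | i ≤ #(s ∩ t)} ⊆
      powersetCard i t ⊻ powersetCard (k - i) univ := by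
    intro s hs
    obtain ⟨hsk, hsi⟩ : #s = k ∧ i ≤ #(s ∩ t) := by simpa using hs
    obtain ⟨u, hus, hu⟩ := exists_subset_card_eq hsi
    obtain ⟨hus, hut⟩ := subset_inter_iff.mp hus
    refine mem_sups.mpr ⟨u, by simp [hut, hu], s \ u, ?_, union_sdiff_of_subset hus⟩
    simp [card_sdiff_of_subset hus, hsk, hu]
  simpa using (card_le_card hsub).trans (card_sups_le _ _)

end Fintype

lemma one_lt_card_sdiff_of_sum_eq [AddCommGroup α] {s t : Finset α} (hcard : #s = #t)
    (hsum : ∑ a ∈ s, a = ∑ a ∈ t, a) (hst : s ≠ t) : 1 < #(s \ t) := by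
  have hpos : #(s \ t) ≠ 0 := fun h =>
    hst (eq_of_subset_of_card_le (by simpa using h) hcard.ge)
  by_contra! hle
  have hone : #(s \ t) = 1 := by lia
  obtain ⟨a, ha⟩ := card_eq_one.mp hone
  obtain ⟨b, hb⟩ := card_eq_one.mp (card_sdiff_comm hcard ▸ hone)
  have hab : a - b = 0 := by
    simpa only [ha, hb, hsum, sum_singleton, sub_self] using
      sum_sdiff_sub_sum_sdiff (s₁ := t) (s₂ := s) (f := fun a => a)
  have hat : a ∈ t \ s := by rw [hb, sub_eq_zero.mp hab, mem_singleton]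
  have has : a ∈ s \ t := by rw [ha, mem_singleton]
  exact (mem_sdiff.mp hat).2 (mem_sdiff.mp has).1

/-- The members of a largest fibre of `s ↦ ∑ a ∈ s, a`. -/
lemma exists_sized_pairwise_one_lt_card_sdiff [AddCommGroup α] [Fintype α] (r : ℕ) :
    ∃ 𝒜 : Finset (Finset α), (𝒜 : Set (Finset α)).Sized r ∧
      (𝒜 : Set (Finset α)).Pairwise (fun s t => 1 < #(s \ t)) ∧
      (Fintype.card α).choose r ≤ Fintype.card α * #𝒜 := by
  let fibre (g : α) : Finset (Finset α) := {s ∈ powersetCard r univ | ∑ a ∈ s, a = g}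
  obtain ⟨g, -, hg⟩ := exists_max_image univ (fun g => #(fibre g)) univ_nonempty
  have hsized : (fibre g : Set (Finset α)).Sized r := fun s hs => by simp_all [fibre]
  refine ⟨fibre g, hsized, fun s hs t ht hst => ?_, ?_⟩
  · refine one_lt_card_sdiff_of_sum_eq ((hsized hs).trans (hsized ht).symm) ?_ hst
    simp_all [fibre]
  · calc (Fintype.card α).choose r = #(powersetCard r (univ : Finset α)) := by simp
      _ ≤ #(fibre g) * #(univ : Finset α) :=
        card_le_mul_card_image_of_maps_to (fun _ _ => mem_univ _) _ hg
      _ = Fintype.card α * #(fibre g) := by rw [card_univ, mul_comm]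

end FinsetCounting

/-- `T` is an isolated clique of `G`: it has `k + 1` vertices, and among the `k`-sets meeting `T`
in at least `i` vertices the edges of `G` are exactly those contained in `T`. -/
structure IsIsolatedClique_s10 {v k : ℕ} (i : ℕ) (G : HGraph v k) (T : Finset (Fin v)) : Prop where
  card_eq : #T = k + 1
  edge_iff : ∀ S : KSet v k, i ≤ #(S.1 ∩ T) → (G S = true ↔ S.1 ⊆ T)

open Classical in
/-- The hypergraph property of containing an isolated clique, which separates sensitivity from
block sensitivity. -/
noncomputable def hasIsolatedClique (k i v : ℕ) (G : HGraph v k) : Bool :=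
  decide (∃ T, IsIsolatedClique_s10 i G T)

/-- The hypergraph whose edges are all the `k`-subsets of `T`; for `#T = k + 1` it is the extremal
input for the lower bound on the sensitivity. -/
def cliqueOn {v : ℕ} (k : ℕ) (T : Finset (Fin v)) : HGraph v k := fun S => decide (S.1 ⊆ T)

section Invariance

variable {v k i : ℕ}

lemma hasIsolatedClique_eq_true_iff {G : HGraph v k} :
    hasIsolatedClique k i v G = true ↔ ∃ T, IsIsolatedClique_s10 i G T := by
  simp [hasIsolatedClique]

lemma hasIsolatedClique_eq_false_iff {G : HGraph v k} :
    hasIsolatedClique k i v G = false ↔ ∀ T, ¬ IsIsolatedClique_s10 i G T := by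
  simp [hasIsolatedClique]

lemma permKSet_inv_permKSet (σ : Equiv.Perm (Fin v)) (S : KSet v k) :
    permKSet σ⁻¹ (permKSet σ S) = S := by
  ext x
  simp [permKSet, Equiv.Perm.inv_def]

lemma isIsolatedClique_perm_iff {G : HGraph v k} {T : Finset (Fin v)} (σ : Equiv.Perm (Fin v)) :
    IsIsolatedClique_s10 i (fun S => G (permKSet σ⁻¹ S)) (T.map σ.toEmbedding) ↔
      IsIsolatedClique_s10 i G T := by
  have hperm : Function.Surjective (permKSet (k := k) σ) := fun S =>
    ⟨permKSet σ⁻¹ S, by simpa using permKSet_inv_permKSet σ⁻¹ S⟩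
  have hcard (S : KSet v k) : #((permKSet σ S).1 ∩ T.map σ.toEmbedding) = #(S.1 ∩ T) := by
    rw [permKSet, ← map_inter, card_map]
  have hsub (S : KSet v k) : (permKSet σ S).1 ⊆ T.map σ.toEmbedding ↔ S.1 ⊆ T := map_subset_map
  constructor
  · intro h
    refine ⟨by simpa using h.card_eq, fun S hS => ?_⟩
    simpa only [permKSet_inv_permKSet, hsub] using h.edge_iff (permKSet σ S) (by rwa [hcard])
  · intro h
    refine ⟨by simpa using h.card_eq, hperm.forall.mpr fun S hS => ?_⟩
    simpa only [permKSet_inv_permKSet, hsub] using h.edge_iff S (by rwa [← hcard])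

lemma isHypergraphProperty_hasIsolatedClique (k i v : ℕ) :
    IsHypergraphProperty (hasIsolatedClique k i v) := fun σ G => by
  rw [Bool.eq_iff_iff, hasIsolatedClique_eq_true_iff, hasIsolatedClique_eq_true_iff]
  exact (σ.finsetCongr.exists_congr fun T => (isIsolatedClique_perm_iff σ).symm).symm

end Invariance

section IsolatedClique

variable {v k i : ℕ} {G G' : HGraph v k} {S : KSet v k} {T T' : Finset (Fin v)}

lemma card_filter_kSet (p : Finset (Fin v) → Prop) [DecidablePred p] :
    #{S : KSet v k | p S.1} = #{s ∈ powersetCard k univ | p s} := by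
  rw [← card_map (Function.Embedding.subtype _)]
  congr 1
  ext s
  simp [and_comm]

lemma card_kSet : Fintype.card (KSet v k) = v.choose k := by
  rw [Fintype.card_finset_len, Fintype.card_fin]

lemma isIsolatedClique_cliqueOn (hT : #T = k + 1) : IsIsolatedClique_s10 i (cliqueOn k T) T :=
  ⟨hT, fun _ _ => decide_eq_true_iff⟩

namespace IsIsolatedClique_s10

lemma apply_eq_true (h : IsIsolatedClique_s10 i G T) (hik : i ≤ k) (hS : S.1 ⊆ T) : G S = true :=
  (h.edge_iff S (by rwa [inter_eq_left.mpr hS, S.2])).mpr hS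

lemma update_of_card_inter_lt (h : IsIsolatedClique_s10 i G T) (hS : #(S.1 ∩ T) < i) (b : Bool) :
    IsIsolatedClique_s10 i (Function.update G S b) T where
  card_eq := h.card_eq
  edge_iff R hR := by
    rw [Function.update_of_ne (by rintro rfl; lia)]
    exact h.edge_iff R hR

lemma of_update_of_card_inter_lt {b : Bool} (h : IsIsolatedClique_s10 i (Function.update G S b) T)
    (hS : #(S.1 ∩ T) < i) : IsIsolatedClique_s10 i G T := by
  simpa using h.update_of_card_inter_lt hS (G S)

lemma one_lt_card_nonedges (h : IsIsolatedClique_s10 i G T) (hk : 2 ≤ k) (hik : i < k)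
    (hT' : #T' = k + 1) (hne : T ≠ T') (hi : i ≤ #(T ∩ T')) :
    1 < #{S : KSet v k | S.1 ⊆ T' ∧ G S = false} := by
  calc 1 < #{s ∈ powersetCard k T' | ¬ s ⊆ T ∧ i ≤ #(s ∩ T)} :=
        one_lt_card_filter_powersetCard hk hik h.card_eq hT' hne hi
    _ = #{s ∈ powersetCard k univ | s ⊆ T' ∧ ¬ s ⊆ T ∧ i ≤ #(s ∩ T)} := by
        congr 1
        ext s
        simp only [mem_filter, mem_powersetCard, subset_univ, true_and]
        tauto
    _ = #{S : KSet v k | S.1 ⊆ T' ∧ ¬ S.1 ⊆ T ∧ i ≤ #(S.1 ∩ T)} := (card_filter_kSet _).symm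
    _ ≤ #{S : KSet v k | S.1 ⊆ T' ∧ G S = false} :=
        card_le_card <| monotone_filter_right _ fun S _ ⟨hST', hST, hS⟩ =>
          ⟨hST', Bool.eq_false_iff.mpr (mt (h.edge_iff S hS).mp hST)⟩

/-- Two `k`-subsets of `T'` are non-edges of `G` and two `k`-subsets of `T` are non-edges of `G'`;
`G` and `G'` disagree on all four. -/
lemma eq_of_hammingDist_lt (h : IsIsolatedClique_s10 i G T) (h' : IsIsolatedClique_s10 i G' T')
    (hk : 2 ≤ k) (hik : i < k) (hi : i ≤ #(T ∩ T')) (hdist : hammingDist G G' < 4) : T = T' := by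
  by_contra hne
  let N : Finset (KSet v k) := {S | S.1 ⊆ T' ∧ G S = false}
  let N' : Finset (KSet v k) := {S | S.1 ⊆ T ∧ G' S = false}
  have hN : 1 < #N := h.one_lt_card_nonedges hk hik h'.card_eq hne hi
  have hN' : 1 < #N' :=
    h'.one_lt_card_nonedges hk hik h.card_eq (Ne.symm hne) (by rwa [inter_comm])
  have hGN (S) (hS : S ∈ N) : G S = false ∧ G' S = true := by
    obtain ⟨hST', hGS⟩ := (mem_filter.mp hS).2
    exact ⟨hGS, h'.apply_eq_true hik.le hST'⟩
  have hGN' (S) (hS : S ∈ N') : G S = true ∧ G' S = false := by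
    obtain ⟨hST, hGS⟩ := (mem_filter.mp hS).2
    exact ⟨h.apply_eq_true hik.le hST, hGS⟩
  have hdisj : Disjoint N N' := disjoint_left.mpr fun S hS hS' => by
    simpa [(hGN S hS).1] using (hGN' S hS').1
  have hsub : N ∪ N' ⊆ ({S | G S ≠ G' S} : Finset (KSet v k)) := union_subset
    (fun S hS => by simp [hGN S hS]) (fun S hS => by simp [hGN' S hS])
  have hle : #N + #N' ≤ hammingDist G G' :=
    (card_union_of_disjoint hdisj).symm.trans_le (card_le_card hsub)
  lia

end IsIsolatedClique_s10

end IsolatedClique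

section Sensitivity

variable {v k i : ℕ} {G : HGraph v k} {S S' : KSet v k} {T T' : Finset (Fin v)}

lemma eq_of_isIsolatedClique_flip (hk : 2 ≤ k) (hik : i < k) (hG : ∀ T, ¬ IsIsolatedClique_s10 i G T)
    (h : IsIsolatedClique_s10 i (Function.update G S (!G S)) T)
    (h' : IsIsolatedClique_s10 i (Function.update G S' (!G S')) T') (hi : i ≤ #(T ∩ T')) :
    S = S' := by
  have hdist : hammingDist (Function.update G S (!G S)) (Function.update G S' (!G S')) ≤ 1 + 1 :=
    (hammingDist_triangle_right _ _ G).trans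
      (add_le_add (hammingDist_update_le_one G S _) (hammingDist_update_le_one G S' _))
  obtain rfl : T = T' := h.eq_of_hammingDist_lt h' hk hik hi (by lia)
  by_contra hne
  have hS : i ≤ #(S.1 ∩ T) := by
    by_contra! hS
    exact hG T (h.of_update_of_card_inter_lt hS)
  have hflip := (h.edge_iff S hS).trans (h'.edge_iff S hS).symm
  simp [Function.update_of_ne hne] at hflip

/-- Assign to each sensitive `k`-set an `i`-subset of the clique created by flipping it. -/
lemma localSens_le_of_eq_false (hk : 2 ≤ k) (hik : i < k)
    (hG : hasIsolatedClique k i v G = false) :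
    localSens (hasIsolatedClique k i v) G ≤ v.choose i := by
  let creates (S : KSet v k) (J : Finset (Fin v)) : Prop :=
    ∃ T, IsIsolatedClique_s10 i (Function.update G S (!G S)) T ∧ J ⊆ T
  have hcard : #(powersetCard i (univ : Finset (Fin v))) = v.choose i := by simp
  rw [localSens, ← hcard]
  refine card_le_card_of_forall_subsingleton creates (fun S hS => ?_) fun J hJ S hS S' hS' => ?_
  · rw [mem_filter_univ, hG, Bool.ne_false_iff, hasIsolatedClique_eq_true_iff] at hS
    obtain ⟨T, hT⟩ := hS
    obtain ⟨J, hJT, hJ⟩ := exists_subset_card_eq (show i ≤ #T by have := hT.card_eq; lia)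
    exact ⟨J, by simp [hJ], T, hT, hJT⟩
  · obtain ⟨-, T, hT, hJT⟩ := hS
    obtain ⟨-, T', hT', hJT'⟩ := hS'
    refine eq_of_isIsolatedClique_flip hk hik (hasIsolatedClique_eq_false_iff.mp hG) hT hT' ?_
    rw [← (mem_powersetCard.mp hJ).2]
    exact card_le_card (subset_inter hJT hJT')

/-- Only flips of `k`-sets meeting an isolated clique in at least `i` vertices can destroy it. -/
lemma localSens_le_of_eq_true (hG : hasIsolatedClique k i v G = true) :
    localSens (hasIsolatedClique k i v) G ≤ (k + 1).choose i * v.choose (k - i) := by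
  obtain ⟨T, hT⟩ := hasIsolatedClique_eq_true_iff.mp hG
  calc localSens (hasIsolatedClique k i v) G ≤ #{S : KSet v k | i ≤ #(S.1 ∩ T)} := by
        refine card_le_card <| monotone_filter_right _ fun S _ hS => ?_
        by_contra! hST
        rw [hG, ne_eq, Bool.not_eq_true, hasIsolatedClique_eq_false_iff] at hS
        exact hS T (hT.update_of_card_inter_lt hST _)
    _ = #{s ∈ powersetCard k univ | i ≤ #(s ∩ T)} := card_filter_kSet fun s => i ≤ #(s ∩ T)
    _ ≤ (#T).choose i * (Fintype.card (Fin v)).choose (k - i) := card_filter_le_card_inter_le T i k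
    _ = (k + 1).choose i * v.choose (k - i) := by rw [hT.card_eq, Fintype.card_fin]

lemma sens_hasIsolatedClique_le (hk : 2 ≤ k) (hik : i < k) :
    sens (hasIsolatedClique k i v) ≤ max (v.choose i) ((k + 1).choose i * v.choose (k - i)) := by
  refine Finset.sup_le fun G _ => ?_
  cases hG : hasIsolatedClique k i v G
  · exact le_max_of_le_left (localSens_le_of_eq_false hk hik hG)
  · exact le_max_of_le_right (localSens_le_of_eq_true hG)

/-- Any `(k + 1)`-set other than `T` contains two non-edges of `cliqueOn k T`, and adding `S`
repairs only one of them. -/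
lemma not_isIsolatedClique_update_cliqueOn (hk : 2 ≤ k) (hik : i ≤ k) (hT : #T = k + 1)
    (hS : i ≤ #(S.1 ∩ T)) (hST : ¬ S.1 ⊆ T) :
    ¬ IsIsolatedClique_s10 i (Function.update (cliqueOn k T) S true) T' := by
  intro h
  rcases eq_or_ne T T' with rfl | hne
  · exact hST ((h.edge_iff S hS).mp (Function.update_self ..))
  · have htwo := (isIsolatedClique_cliqueOn (i := 0) hT).one_lt_card_nonedges hk (by lia)
      h.card_eq hne (Nat.zero_le _)
    obtain ⟨R, hR, hRS⟩ := exists_mem_ne htwo S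
    obtain ⟨hRT', hR⟩ := (mem_filter.mp hR).2
    have hRtrue := h.apply_eq_true hik hRT'
    rw [Function.update_of_ne hRS, hR] at hRtrue
    exact Bool.false_ne_true hRtrue

lemma choose_mul_choose_le_sens (hk : 2 ≤ k) (hik : i < k) (hv : k + 1 ≤ v) :
    (k + 1).choose i * (v - (k + 1)).choose (k - i) ≤ sens (hasIsolatedClique k i v) := by
  obtain ⟨T, -, hT⟩ := exists_subset_card_eq (show k + 1 ≤ #(univ : Finset (Fin v)) by simpa)
  have hG : hasIsolatedClique k i v (cliqueOn k T) = true :=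
    hasIsolatedClique_eq_true_iff.mpr ⟨T, isIsolatedClique_cliqueOn hT⟩
  calc (k + 1).choose i * (v - (k + 1)).choose (k - i)
      = #{s ∈ powersetCard k univ | #(s ∩ T) = i} := by
        rw [card_filter_card_inter_eq T hik.le, hT, Fintype.card_fin]
    _ = #{S : KSet v k | #(S.1 ∩ T) = i} := (card_filter_kSet fun s => #(s ∩ T) = i).symm
    _ ≤ localSens (hasIsolatedClique k i v) (cliqueOn k T) := by
        refine card_le_card <| monotone_filter_right _ fun S _ hS => ?_
        have hST : ¬ S.1 ⊆ T := fun hST => by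
          rw [inter_eq_left.mpr hST, S.2] at hS
          lia
        have hflip : (!cliqueOn k T S) = true := by simp [cliqueOn, hST]
        rw [hG, ne_eq, Bool.not_eq_true, hasIsolatedClique_eq_false_iff, hflip]
        exact fun T' => not_isIsolatedClique_update_cliqueOn hk hik.le hT hS.ge hST
    _ ≤ sens (hasIsolatedClique k i v) := localSens_le_sens ..

end Sensitivity

section BlockSensitivity

variable {v k i : ℕ}

lemma hasIsolatedClique_empty (hik : i ≤ k) :
    hasIsolatedClique k i v (fun _ => false) = false := by
  refine hasIsolatedClique_eq_false_iff.mpr fun T hT => ?_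
  obtain ⟨S, hST, hS⟩ := exists_subset_card_eq (show k ≤ #T by have := hT.card_eq; lia)
  exact Bool.false_ne_true (hT.apply_eq_true hik (S := ⟨S, hS⟩) hST)

lemma flipBlock_empty_eq_cliqueOn (T : Finset (Fin v)) :
    flipBlock (fun _ => false) {S : KSet v k | S.1 ⊆ T} = cliqueOn k T := by
  funext S
  simp [flipBlock, cliqueOn]

lemma disjoint_filter_kSet_subset {T T' : Finset (Fin v)} (hT : #T = k + 1)
    (hTT' : 1 < #(T \ T')) :
    Disjoint ({S | S.1 ⊆ T} : Finset (KSet v k)) ({S | S.1 ⊆ T'} : Finset (KSet v k)) := by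
  refine disjoint_filter.mpr fun S _ hST hST' => hTT'.not_ge ?_
  calc #(T \ T') ≤ #(T \ S.1) := card_le_card (sdiff_subset_sdiff Subset.rfl hST')
    _ = 1 := by rw [card_sdiff_of_subset hST, hT, S.2]; lia

lemma choose_le_mul_blockSens (hik : i ≤ k) (hv : v ≠ 0) :
    v.choose (k + 1) ≤ v * blockSens (hasIsolatedClique k i v) := by
  have : NeZero v := ⟨hv⟩
  obtain ⟨𝒜, hsized, hpair, hcard⟩ :=
    exists_sized_pairwise_one_lt_card_sdiff (α := Fin v) (k + 1)
  rw [Fintype.card_fin] at hcard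
  refine hcard.trans (Nat.mul_le_mul_left v ?_)
  refine card_le_blockSens (x := fun _ => false)
    (B := fun T => ({S | S.1 ⊆ T} : Finset (KSet v k))) (fun T hT => ?_) fun T hT T' hT' hne => ?_
  · rw [flipBlock_empty_eq_cliqueOn, hasIsolatedClique_empty hik, Bool.ne_false_iff]
    exact hasIsolatedClique_eq_true_iff.mpr ⟨T, isIsolatedClique_cliqueOn (hsized hT)⟩
  · exact disjoint_filter_kSet_subset (hsized hT) (hpair hT hT' hne)

end BlockSensitivity

section Asymptotics

variable {v k i : ℕ}

lemma pow_le_mul_choose {n r : ℕ} (h : v ≤ 2 * (n + 1 - r)) :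
    v ^ r ≤ 2 ^ r * r.factorial * n.choose r :=
  calc v ^ r ≤ (2 * (n + 1 - r)) ^ r := Nat.pow_le_pow_left h r
    _ = 2 ^ r * (n + 1 - r) ^ r := mul_pow ..
    _ ≤ 2 ^ r * n.descFactorial r := Nat.mul_le_mul_left _ (Nat.pow_sub_le_descFactorial n r)
    _ = 2 ^ r * r.factorial * n.choose r := by
        rw [Nat.descFactorial_eq_factorial_mul_choose, mul_assoc]

lemma pow_le_mul_sens (hk : 2 ≤ k) (hik : i < k) (hv : 4 * (k + 1) ≤ v) :
    v ^ (k - i) ≤ 2 ^ (k + 1) * (k + 1).factorial * sens (hasIsolatedClique k i v) :=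
  calc v ^ (k - i) ≤ 2 ^ (k - i) * (k - i).factorial * (v - (k + 1)).choose (k - i) :=
        pow_le_mul_choose (by lia)
    _ ≤ 2 ^ (k + 1) * (k + 1).factorial * sens (hasIsolatedClique k i v) := by
        gcongr
        · norm_num
        · lia
        · lia
        · exact (Nat.le_mul_of_pos_left _ (Nat.choose_pos (by lia))).trans
            (choose_mul_choose_le_sens hk hik (by lia))

lemma sens_le_mul_pow (hk : 2 ≤ k) (hik : 2 * i ≤ k) (hv : 0 < v) :
    sens (hasIsolatedClique k i v) ≤ 2 ^ (k + 1) * v ^ (k - i) := by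
  refine (sens_hasIsolatedClique_le hk (by lia)).trans (max_le ?_ ?_)
  · calc v.choose i ≤ v ^ i := Nat.choose_le_pow ..
      _ ≤ v ^ (k - i) := Nat.pow_le_pow_right hv (by lia)
      _ ≤ 2 ^ (k + 1) * v ^ (k - i) := Nat.le_mul_of_pos_left _ (by positivity)
  · exact Nat.mul_le_mul (Nat.choose_le_two_pow ..) (Nat.choose_le_pow ..)

lemma pow_le_mul_blockSens (hik : i ≤ k) (hv : 2 * k ≤ v) (hv₀ : 0 < v) :
    v ^ k ≤ 2 ^ (k + 1) * (k + 1).factorial * blockSens (hasIsolatedClique k i v) := by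
  refine Nat.le_of_mul_le_mul_left ?_ hv₀
  calc v * v ^ k = v ^ (k + 1) := (pow_succ' v k).symm
    _ ≤ 2 ^ (k + 1) * (k + 1).factorial * v.choose (k + 1) := pow_le_mul_choose (by lia)
    _ ≤ 2 ^ (k + 1) * (k + 1).factorial * (v * blockSens (hasIsolatedClique k i v)) :=
        Nat.mul_le_mul_left _ (choose_le_mul_blockSens hik hv₀.ne')
    _ = v * (2 ^ (k + 1) * (k + 1).factorial * blockSens (hasIsolatedClique k i v)) :=
        mul_left_comm ..

lemma blockSens_le_pow (f : HGraph v k → Bool) : blockSens f ≤ v ^ k :=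
  calc blockSens f ≤ Fintype.card (KSet v k) := blockSens_le_card f
    _ = v.choose k := card_kSet
    _ ≤ v ^ k := Nat.choose_le_pow ..

end Asymptotics

theorem stmt10 (k i : ℕ) (hk : 2 ≤ k) (hi1 : 1 ≤ i) (hik : 2 * i ≤ k) :
    ∃ f : (v : ℕ) → (HGraph v k → Bool),
      (∀ v, IsHypergraphProperty (f v)) ∧
      ∃ c C : ℝ, 0 < c ∧ 0 < C ∧ ∃ v₀ : ℕ, ∀ v : ℕ, v₀ ≤ v →
        c * (v : ℝ) ^ (k - i) ≤ (sens (f v) : ℝ) ∧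
        (sens (f v) : ℝ) ≤ C * (v : ℝ) ^ (k - i) ∧
        c * (v : ℝ) ^ k ≤ (blockSens (f v) : ℝ) ∧
        (blockSens (f v) : ℝ) ≤ C * (v : ℝ) ^ k := by
  let D : ℕ := 2 ^ (k + 1) * (k + 1).factorial
  have hD : (0 : ℝ) < D := by positivity
  refine ⟨hasIsolatedClique k i, isHypergraphProperty_hasIsolatedClique k i, (D : ℝ)⁻¹,
    2 ^ (k + 1), inv_pos.mpr hD, by positivity, 4 * (k + 1), fun v hv => ⟨?_, ?_, ?_, ?_⟩⟩
  · rw [inv_mul_le_iff₀ hD]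
    exact_mod_cast pow_le_mul_sens hk (by lia) hv
  · exact_mod_cast sens_le_mul_pow hk hik (by lia)
  · rw [inv_mul_le_iff₀ hD]
    exact_mod_cast pow_le_mul_blockSens (by lia) (by lia) (by lia)
  · exact_mod_cast (blockSens_le_pow _).trans (Nat.le_mul_of_pos_left _ (by positivity))
end
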